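/- arXiv:1903.02952 — 4 statements merged into one kernel-verified Lean document; each statement's English description precedes it below -/
import Mathlib

section
/- Let R = ℂ[∂]x be a Leibniz conformal algebra that is a free ℂ[∂]-module of rank 1 generated by x. Then either R is abelian (i.e. [x_λ x] = 0) or R is isomorphic to the Virasoro Lie conformal algebra, i.e. [x_λ x] = (∂ + 2λ)x. -/
noncomputable section

/-- `g : ℂ → R` is (the evaluation of) a polynomial in `λ` with coefficients in `R`,
i.e. an element of `R[λ]`. -/
def IsPolyFun {R : Type*} [AddCommGroup R] [Module ℂ R] (g : ℂ → R) : Prop :=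
  ∃ (N : ℕ) (c : ℕ → R), ∀ l : ℂ, g l = ∑ i ∈ Finset.range N, l ^ i • c i

/-- A conformal bilinear map `U × V → W[λ]`, in evaluated form: `f_λ(∂u, v) = -λ f_λ(u,v)`
and `f_λ(u, ∂v) = (∂ + λ) f_λ(u,v)`. -/
structure IsConformalBilin {U V W : Type*}
    [AddCommGroup U] [Module ℂ U] [AddCommGroup V] [Module ℂ V]
    [AddCommGroup W] [Module ℂ W]
    (DU : Module.End ℂ U) (DV : Module.End ℂ V) (DW : Module.End ℂ W)
    (f : ℂ → U → V → W) : Prop where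
  add_left : ∀ (l : ℂ) (a a' : U) (b : V), f l (a + a') b = f l a b + f l a' b
  smul_left : ∀ (l c : ℂ) (a : U) (b : V), f l (c • a) b = c • f l a b
  add_right : ∀ (l : ℂ) (a : U) (b b' : V), f l a (b + b') = f l a b + f l a b'
  smul_right : ∀ (l c : ℂ) (a : U) (b : V), f l a (c • b) = c • f l a b
  poly : ∀ (a : U) (b : V), IsPolyFun (fun l => f l a b)
  conf_left : ∀ (l : ℂ) (a : U) (b : V), f l (DU a) b = (-l) • f l a b
  conf_right : ∀ (l : ℂ) (a : U) (b : V), f l a (DV b) = DW (f l a b) + l • f l a b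

/-- A Leibniz conformal algebra structure on the `ℂ[∂]`-module `(R, D)`:
a conformal bilinear `λ`-bracket satisfying the Jacobi identity. -/
structure IsLeibnizConformal {R : Type*} [AddCommGroup R] [Module ℂ R]
    (D : Module.End ℂ R) (br : ℂ → R → R → R) : Prop where
  bilin : IsConformalBilin D D D br
  jacobi : ∀ (l m : ℂ) (a b c : R),
    br l a (br m b c) = br (l + m) (br l a b) c + br m b (br l a c)

open Polynomial in
theorem aux_left {R : Type*} [AddCommGroup R] [Module ℂ R] (D : Module.End ℂ R)
    (br : ℂ → R → R → R) (h : IsConformalBilin D D D br) (l : ℂ) (a b : R) (p : ℂ[X]) :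
    br l (aeval D p a) b = p.eval (-l) • br l a b := by
  induction p using Polynomial.induction_on' with
  | add p q hp hq =>
    rw [map_add, LinearMap.add_apply, h.add_left, hp, hq, eval_add, add_smul]
  | monomial n c =>
    have key : ∀ n : ℕ, br l ((D ^ n) a) b = (-l) ^ n • br l a b := by
      intro n
      induction n with
      | zero => simp
      | succ n ih => rw [pow_succ', Module.End.mul_apply, h.conf_left, ih, smul_smul, pow_succ']
    rw [aeval_monomial, eval_monomial, Module.End.mul_apply, Module.algebraMap_end_apply,
      h.smul_left, key, smul_smul]

open Polynomial in
theorem aux_right {R : Type*} [AddCommGroup R] [Module ℂ R] (D : Module.End ℂ R)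
    (br : ℂ → R → R → R) (h : IsConformalBilin D D D br) (l : ℂ) (a b : R) (p : ℂ[X]) :
    br l a (aeval D p b) = aeval D (p.comp (X + C l)) (br l a b) := by
  induction p using Polynomial.induction_on' with
  | add p q hp hq =>
    rw [map_add, LinearMap.add_apply, h.add_right, hp, hq, add_comp, map_add, LinearMap.add_apply]
  | monomial n c =>
    have key : ∀ n : ℕ, br l a ((D ^ n) b) = aeval D ((X + C l) ^ n) (br l a b) := by
      intro n
      induction n with
      | zero => simp
      | succ n ih =>
        rw [pow_succ', Module.End.mul_apply, h.conf_right, ih, pow_succ', map_mul,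
          Module.End.mul_apply]
        simp
    rw [aeval_monomial, monomial_comp, Module.End.mul_apply, Module.algebraMap_end_apply,
      h.smul_right, key, map_mul, Module.End.mul_apply, aeval_C, Module.algebraMap_end_apply]

open Polynomial in
theorem aux_coeff (k : ℕ) (A B : ℂ[X]) (hA : A.natDegree ≤ k + 1) (hB : B.natDegree ≤ k + 1) :
    (A * B).coeff (2 * k + 1) = A.coeff (k + 1) * B.coeff k + A.coeff k * B.coeff (k + 1) := by
  rw [coeff_mul]
  rw [Finset.sum_eq_add_of_mem (k + 1, k) (k, k + 1)]
  · simp; omega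
  · simp; omega
  · simp
  · rintro ⟨i, j⟩ hij ⟨h1, h2⟩
    rw [Finset.HasAntidiagonal.mem_antidiagonal] at hij
    simp only [ne_eq, Prod.mk.injEq] at hij h1 h2
    by_cases hi : k + 1 < i
    · rw [coeff_eq_zero_of_natDegree_lt (by omega), zero_mul]
    · rw [coeff_eq_zero_of_natDegree_lt (p := B) (by omega), mul_zero]

open Polynomial in
theorem aux_shift_coeff (k : ℕ) (A : ℂ[X]) (l : ℂ) (hA : A.natDegree ≤ k + 1) :
    (A.comp (X + C l)).natDegree ≤ k + 1 ∧ (A.comp (X + C l)).coeff (k + 1) = A.coeff (k + 1) ∧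
    (A.comp (X + C l)).coeff k = A.coeff k + (k + 1) * l * A.coeff (k + 1) := by
  have e : A.comp (X + C l) = taylor l A := rfl
  rw [e]
  have h0 : ∀ j, k + 1 < j → A.coeff j = 0 := fun j hj =>
    coeff_eq_zero_of_natDegree_lt (by omega)
  refine ⟨by simpa using hA, ?_, ?_⟩
  · rw [taylor_coeff, eval_eq_sum_range' (n := 1)]
    · simp [hasseDeriv_coeff]
    · have := natDegree_hasseDeriv_le A (k + 1)
      omega
  · rw [taylor_coeff, eval_eq_sum_range' (n := 2)]
    · simp [hasseDeriv_coeff, Finset.sum_range_succ, add_comm 1 k]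
      ring
    · have := natDegree_hasseDeriv_le A k
      omega

open Polynomial in
/-- classification of the structure polynomial -/
theorem aux_class (F : ℂ[X][X])
    (hJ : ∀ l m : ℂ, (F.map (evalRingHom m)).comp (X + C l) * F.map (evalRingHom l) =
      C ((F.map (evalRingHom l)).eval (-l - m)) * F.map (evalRingHom (l + m)) +
      (F.map (evalRingHom l)).comp (X + C m) * F.map (evalRingHom m)) :
    F = 0 ∨ ∃ a : ℂ, a ≠ 0 ∧ ∀ l, F.map (evalRingHom l) = C a * (X + C (2 * l)) := by
  by_cases hF : F = 0
  · exact Or.inl hF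
  right
  have hdeg : ∀ l, (F.map (evalRingHom l)).natDegree ≤ F.natDegree := fun l => natDegree_map_le
  have ha : F.leadingCoeff ≠ 0 := leadingCoeff_ne_zero.mpr hF
  -- degree at most one
  have hn : F.natDegree ≤ 1 := by
    by_contra hn
    obtain ⟨k, hk⟩ : ∃ k, F.natDegree = (k + 1) + 1 := ⟨F.natDegree - 2, by omega⟩
    rw [hk] at hdeg
    have hz : (F.leadingCoeff * F.leadingCoeff.comp (X + 1)) = 0 := by
      apply Polynomial.funext
      intro l
      have h := congrArg (fun p => p.coeff (2 * (k + 1) + 1)) (hJ (l + 1) l)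
      obtain ⟨d1, e1, f1⟩ := aux_shift_coeff (k + 1) _ (l + 1) (hdeg l)
      obtain ⟨d2, e2, f2⟩ := aux_shift_coeff (k + 1) _ l (hdeg (l + 1))
      simp only [coeff_add, coeff_C_mul] at h
      rw [aux_coeff _ _ _ d1 (hdeg _), aux_coeff _ _ _ d2 (hdeg _), e1, e2, f1, f2,
        coeff_eq_zero_of_natDegree_lt (p := F.map (evalRingHom (l + 1 + l)))
          (lt_of_le_of_lt (hdeg _) (by omega))] at h
      simp only [coeff_map, coe_evalRingHom] at h
      have hlc : F.leadingCoeff = F.coeff (k + 1 + 1) := by rw [leadingCoeff, hk]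
      have hk0 : ((k : ℂ) + 1 + 1) ≠ 0 := by exact_mod_cast Nat.succ_ne_zero (k + 1)
      simp only [eval_mul, eval_comp, eval_add, eval_X, eval_one, eval_zero, hlc]
      apply mul_left_cancel₀ hk0
      push_cast at h
      linear_combination h
    rcases mul_eq_zero.mp hz with h | h
    · exact ha h
    · apply ha
      have : (F.leadingCoeff.comp (X + 1)).comp (X - 1) = 0 := by rw [h, zero_comp]
      rw [comp_assoc] at this
      simpa using this
  set a := F.coeff 1 with ha'
  set b := F.coeff 0 with hb'
  have hFl : ∀ l, F.map (evalRingHom l) = C (a.eval l) * X + C (b.eval l) := by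
    intro l
    have := eq_X_add_C_of_natDegree_le_one ((hdeg l).trans hn)
    rw [this]; simp [ha', hb']
  -- evaluate
  have hE : ∀ l m d : ℂ, (a.eval m * (d + l) + b.eval m) * (a.eval l * d + b.eval l) =
      (a.eval l * (-l - m) + b.eval l) * (a.eval (l + m) * d + b.eval (l + m)) +
      (a.eval l * (d + m) + b.eval l) * (a.eval m * d + b.eval m) := by
    intro l m d
    have h := congrArg (fun p => p.eval d) (hJ l m)
    simpa [hFl] using h
  have hab : a ≠ 0 ∨ b ≠ 0 := by
    by_contra hc
    push Not at hc
    apply hF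
    rw [eq_X_add_C_of_natDegree_le_one hn, ← ha', ← hb', hc.1, hc.2]; simp
  have hcomp : ∀ p : ℂ[X], p ≠ 0 → p.comp (C 2 * X) ≠ 0 := by
    intro p hp h
    apply hp
    have : (p.comp (C 2 * X)).comp (C (1/2) * X) = 0 := by rw [h, zero_comp]
    rw [comp_assoc] at this
    have e : (C (2:ℂ) * X).comp (C (1/2) * X) = X := by
      simp only [mul_comp, C_comp, X_comp, ← mul_assoc, ← C_mul]; norm_num
    rwa [e, comp_X] at this
  have hb : b = C 2 * X * a := by
    have h1 : (b - C 2 * X * a) * a.comp (C 2 * X) = 0 := by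
      apply Polynomial.funext
      intro l
      have h0 := hE l l 0
      have h1 := hE l l 1
      simp only [eval_mul, eval_sub, eval_comp, eval_C, eval_X, eval_zero]
      rw [two_mul]
      linear_combination h0 - h1
    have h2 : (b - C 2 * X * a) * b.comp (C 2 * X) = 0 := by
      apply Polynomial.funext
      intro l
      have h0 := hE l l 0
      simp only [eval_mul, eval_sub, eval_comp, eval_C, eval_X, eval_zero]
      rw [two_mul]
      linear_combination - h0
    rcases hab with h | h
    · exact sub_eq_zero.mp ((mul_eq_zero.mp h1).resolve_right (hcomp _ h))
    · exact sub_eq_zero.mp ((mul_eq_zero.mp h2).resolve_right (hcomp _ h))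
  have ha0 : a ≠ 0 := by
    intro h
    rw [h, mul_zero] at hb
    rcases hab with h' | h'
    · exact h' h
    · exact h' hb
  have hconst : a = C (a.eval 0) := by
    have h1 : (X * a) * (a - C (a.eval 0)) = 0 := by
      apply Polynomial.funext
      intro l
      have h0 := hE l 0 0
      have h1 := hE l 0 1
      simp only [hb, eval_mul, eval_sub, eval_C, eval_X, eval_zero, add_zero] at h0 h1 ⊢
      linear_combination h0 - h1
    exact sub_eq_zero.mp ((mul_eq_zero.mp h1).resolve_left (mul_ne_zero X_ne_zero ha0))
  refine ⟨a.eval 0, fun h => ha0 (by rw [hconst, h, C_0]), fun l => ?_⟩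
  have hal : a.eval l = a.eval 0 := by rw [hconst]; simp
  rw [hFl, hb]
  simp only [eval_mul, eval_C, eval_X, hal, C_mul]
  ring

open Polynomial in
theorem rank_one_leibniz_conformal_abelian_or_virasoro
    {R : Type*} [AddCommGroup R] [Module ℂ R] (D : Module.End ℂ R)
    (br : ℂ → R → R → R) (hLeib : IsLeibnizConformal D br) (x : R)
    (hfree : ∀ a : R, ∃! p : Polynomial ℂ, (Polynomial.aeval D p) x = a) :
    (∀ (l : ℂ) (a b : R), br l a b = 0) ∨
    ∃ y : R, (∃ c : ℂ, c ≠ 0 ∧ y = c • x) ∧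
      ∀ l : ℂ, br l y y = D y + (2 * l) • y := by
  have hB := hLeib.bilin
  obtain ⟨N, c, hc⟩ := hB.poly x x
  choose q hq using fun a => (hfree a).exists
  have hinj : ∀ p p' : ℂ[X], aeval D p x = aeval D p' x → p = p' := fun p p' h =>
    (hfree (aeval D p' x)).unique h rfl
  let F : ℂ[X][X] := ∑ i ∈ Finset.range N, C (X ^ i) * (q (c i)).map C
  have hF : ∀ l, br l x x = aeval D (F.map (evalRingHom l)) x := by
    intro l
    have e : F.map (evalRingHom l) = ∑ i ∈ Finset.range N, C (l ^ i) * q (c i) := by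
      simp only [F, Polynomial.map_sum, Polynomial.map_mul, map_C, Polynomial.map_map]
      refine Finset.sum_congr rfl fun i _ => ?_
      have : (evalRingHom l).comp (C : ℂ →+* ℂ[X]) = RingHom.id ℂ := by ext <;> simp
      rw [this, Polynomial.map_id]
      simp
    have hc' := hc l
    simp only at hc'
    rw [hc', e, map_sum, LinearMap.sum_apply]
    refine Finset.sum_congr rfl fun i _ => ?_
    rw [map_mul, Module.End.mul_apply, hq, aeval_C, Module.algebraMap_end_apply]
  have hJ := aux_class F (by
    intro l m
    apply hinj
    have h := hLeib.jacobi l m x x x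
    rw [hF m, hF l, aux_right D br hB, aux_left D br hB, aux_right D br hB, hF, hF, hF] at h
    simp only [map_add, map_mul, LinearMap.add_apply, Module.End.mul_apply, aeval_C,
      Module.algebraMap_end_apply]
    rw [h, neg_add']
    )
  rcases hJ with h0 | ⟨a, ha, h⟩
  · left
    intro l u v
    rw [← hq u, ← hq v, aux_left D br hB, aux_right D br hB, hF, h0]
    simp
  · right
    refine ⟨a⁻¹ • x, ⟨a⁻¹, inv_ne_zero ha, rfl⟩, fun l => ?_⟩
    rw [hB.smul_left, hB.smul_right, hF, h]
    simp only [map_add, map_mul, LinearMap.add_apply, Module.End.mul_apply, aeval_C, aeval_X,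
      Module.algebraMap_end_apply, map_smul]
    match_scalars <;> field_simp
end
end

section
/- Let R be a Leibniz conformal algebra, Q a ℂ[∂]-module, and Ω(R,Q) = (↼_λ, ⇀_λ, ◁_λ, ▷_λ, f_λ, {·_λ·}) an extending datum of R by Q. Then R♮Q (the ℂ[∂]-module R × Q with bracket [(a,x)_λ (b,y)] = ([a_λ b] + a↼_λ y + x▷_λ b + f_λ(x,y), a⇀_λ y + x◁_λ b + {x_λ y})) is a Leibniz conformal algebra if and only if the following hold for all a,b ∈ R and x,y,z ∈ Q: (L1) [a_λ b]⇀_{λ+μ} x = a⇀_λ(b⇀_μ x) − b⇀_μ(a⇀_λ x); (L2) [a_λ b]↼_{λ+μ} x = [a_λ (b↼_μ x)] + a↼_λ(b⇀_μ x) − [b_μ (a↼_λ x)] − b↼_μ(a⇀_λ x); (L3) x◁_μ [a_λ b] = a⇀_λ(x◁_μ b) − (a⇀_λ x)◁_{λ+μ} b; (L4) x▷_μ [a_λ b] = [a_λ (x▷_μ b)] + a↼_λ(x◁_μ b) − [(a↼_λ x)_{λ+μ} b] − (a⇀_λ x)▷_{λ+μ} b; (L5) [(x▷_μ a)_{λ+μ}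 b] + (x◁_μ a)▷_{λ+μ} b + [(a↼_λ x)_{λ+μ} b] + (a⇀_λ x)▷_{λ+μ} b = 0; (L6) (x◁_μ a)◁_{λ+μ} b + (a⇀_λ x)◁_{λ+μ} b = 0; (L7) a⇀_λ{x_μ y} = {(a⇀_λ x)_{λ+μ} y} + x◁_μ(a↼_λ y) + {x_μ (a⇀_λ y)} + (a↼_λ x)⇀_{λ+μ} y; (L8) a↼_λ{x_μ y} = (a↼_λ x)↼_{λ+μ} y + f_{λ+μ}(a⇀_λ x, y) + x▷_μ(a↼_λ y) + f_μ(x, a⇀_λ y) − [a_λ f_μ(x,y)]; (L9) (x▷_μ a)↼_{λ+μ} y + f_{λ+μ}(x◁_μ a, y) + (a↼_λ x)↼_{λ+μ} y + f_{λ+μ}(a⇀_λ x, y) = 0; (L10) {(a⇀_λ x)_{λ+μ} y} + (a↼_λ x)⇀_{λ+μ} y + (x▷_μ a)⇀_{λ+μ} y + {(x◁_μ a)_{λ+μ} y} = 0; (L11) {x_λ y}▷_{λ+μ} a = x▷_λ(y▷_μ a) + f_λ(x, y◁_μ a) − [f_λ(x,y)_{λ+μ} a] − y▷_μ(x▷_λ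 a) − f_μ(y, x◁_λ a); (L12) {x_λ y}◁_{λ+μ} a = x◁_λ(y▷_μ a) + {x_λ (y◁_μ a)} − y◁_μ(x▷_λ a) − {y_μ (x◁_λ a)}; (L13) x▷_λ f_μ(y,z) = f_λ(x,y)↼_{λ+μ} z + f_{λ+μ}({x_λ y}, z) + y▷_μ f_λ(x,z) + f_μ(y, {x_λ z}) − f_λ(x, {y_μ z}); (L14) x◁_λ f_μ(y,z) = f_λ(x,y)⇀_{λ+μ} z + y◁_μ f_λ(x,z) + {{x_λ y}_{λ+μ} z} + {y_μ {x_λ z}} − {x_λ {y_μ z}}. -/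
noncomputable section

/-- An extending datum `Ω(R,Q) = (↼, ⇀, ◁, ▷, f, {·_λ·})` of a Leibniz conformal algebra
`R` by a `ℂ[∂]`-module `Q`: six conformal bilinear maps.  Here `lh = ↼`, `rh = ⇀`,
`lt = ◁`, `rt = ▷`, `fm = f`, `bq = {·_λ·}`. -/
structure IsExtendingDatum {R Q : Type*}
    [AddCommGroup R] [Module ℂ R] [AddCommGroup Q] [Module ℂ Q]
    (DR : Module.End ℂ R) (DQ : Module.End ℂ Q)
    (lh : ℂ → R → Q → R) (rh : ℂ → R → Q → Q)
    (lt : ℂ → Q → R → Q) (rt : ℂ → Q → R → R)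
    (fm : ℂ → Q → Q → R) (bq : ℂ → Q → Q → Q) : Prop where
  lh_bilin : IsConformalBilin DR DQ DR lh
  rh_bilin : IsConformalBilin DR DQ DQ rh
  lt_bilin : IsConformalBilin DQ DR DQ lt
  rt_bilin : IsConformalBilin DQ DR DR rt
  fm_bilin : IsConformalBilin DQ DQ DR fm
  bq_bilin : IsConformalBilin DQ DQ DQ bq

/-- The unified product bracket on `R × Q`:
`[(a,x)_λ (b,y)] = ([a_λ b] + a↼_λ y + x▷_λ b + f_λ(x,y), a⇀_λ y + x◁_λ b + {x_λ y})`. -/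
def unifiedBracket {R Q : Type*}
    [AddCommGroup R] [Module ℂ R] [AddCommGroup Q] [Module ℂ Q]
    (br : ℂ → R → R → R)
    (lh : ℂ → R → Q → R) (rh : ℂ → R → Q → Q)
    (lt : ℂ → Q → R → Q) (rt : ℂ → Q → R → R)
    (fm : ℂ → Q → Q → R) (bq : ℂ → Q → Q → Q) :
    ℂ → R × Q → R × Q → R × Q :=
  fun l p q =>
    (br l p.1 q.1 + lh l p.1 q.2 + rt l p.2 q.1 + fm l p.2 q.2,
     rh l p.1 q.2 + lt l p.2 q.1 + bq l p.2 q.2)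

/-- Sum of two polynomial functions. -/
theorem IsPolyFun.add' {R : Type*} [AddCommGroup R] [Module ℂ R] {g h : ℂ → R}
    (hg : IsPolyFun g) (hh : IsPolyFun h) : IsPolyFun (fun l => g l + h l) := by
  obtain ⟨N, c, hc⟩ := hg
  obtain ⟨M, d, hd⟩ := hh
  refine ⟨N + M, fun i => (if i < N then c i else 0) + (if i < M then d i else 0), fun l => ?_⟩
  simp only [smul_add, Finset.sum_add_distrib, hc, hd]
  congr 1
  · rw [Finset.sum_range_add, Finset.sum_eq_zero (s := Finset.range M), add_zero]
    · refine Finset.sum_congr rfl fun i hi => ?_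
      rw [if_pos (Finset.mem_range.1 hi)]
    · intro i _
      simp
  · rw [add_comm N M, Finset.sum_range_add, Finset.sum_eq_zero (s := Finset.range N), add_zero]
    · refine Finset.sum_congr rfl fun i hi => ?_
      rw [if_pos (Finset.mem_range.1 hi)]
    · intro i _
      simp

theorem IsPolyFun.prod' {R Q : Type*} [AddCommGroup R] [Module ℂ R] [AddCommGroup Q] [Module ℂ Q]
    {g : ℂ → R} {h : ℂ → Q}
    (hg : IsPolyFun g) (hh : IsPolyFun h) : IsPolyFun (fun l => (g l, h l)) := by
  have h1 : IsPolyFun (fun l => (g l, (0 : Q))) := by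
    obtain ⟨N, c, hc⟩ := hg
    refine ⟨N, fun i => (c i, 0), fun l => ?_⟩
    ext <;> simp [hc, Prod.fst_sum, Prod.snd_sum]
  have h2 : IsPolyFun (fun l => ((0 : R), h l)) := by
    obtain ⟨N, c, hc⟩ := hh
    refine ⟨N, fun i => (0, c i), fun l => ?_⟩
    ext <;> simp [hc, Prod.fst_sum, Prod.snd_sum]
  simpa using h1.add' h2

theorem IsConformalBilin.zero_left' {U V W : Type*}
    [AddCommGroup U] [Module ℂ U] [AddCommGroup V] [Module ℂ V]
    [AddCommGroup W] [Module ℂ W]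
    {DU : Module.End ℂ U} {DV : Module.End ℂ V} {DW : Module.End ℂ W}
    {f : ℂ → U → V → W} (h : IsConformalBilin DU DV DW f) (l : ℂ) (b : V) : f l 0 b = 0 := by
  simpa using h.smul_left l 0 0 b

theorem IsConformalBilin.zero_right' {U V W : Type*}
    [AddCommGroup U] [Module ℂ U] [AddCommGroup V] [Module ℂ V]
    [AddCommGroup W] [Module ℂ W]
    {DU : Module.End ℂ U} {DV : Module.End ℂ V} {DW : Module.End ℂ W}
    {f : ℂ → U → V → W} (h : IsConformalBilin DU DV DW f) (l : ℂ) (a : U) : f l a 0 = 0 := by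
  simpa using h.smul_right l 0 a 0

/-- For an extending datum `Ω(R,Q)`, the unified product `R ♮ Q` is a Leibniz
conformal algebra if and only if conditions (L1)–(L14) hold. -/
theorem unifiedBracket_isLeibnizConformal_iff
    {R Q : Type*} [AddCommGroup R] [Module ℂ R] [AddCommGroup Q] [Module ℂ Q]
    (DR : Module.End ℂ R) (DQ : Module.End ℂ Q)
    (br : ℂ → R → R → R) (hLeib : IsLeibnizConformal DR br)
    (lh : ℂ → R → Q → R) (rh : ℂ → R → Q → Q)
    (lt : ℂ → Q → R → Q) (rt : ℂ → Q → R → R)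
    (fm : ℂ → Q → Q → R) (bq : ℂ → Q → Q → Q)
    (hdatum : IsExtendingDatum DR DQ lh rh lt rt fm bq) :
    IsLeibnizConformal (LinearMap.prodMap DR DQ) (unifiedBracket br lh rh lt rt fm bq) ↔
    ((∀ (l m : ℂ) (a b : R) (x : Q),    -- (L1)
        rh (l + m) (br l a b) x = rh l a (rh m b x) - rh m b (rh l a x)) ∧
     (∀ (l m : ℂ) (a b : R) (x : Q),    -- (L2)
        lh (l + m) (br l a b) x
          = br l a (lh m b x) + lh l a (rh m b x) - br m b (lh l a x) - lh m b (rh l a x)) ∧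
     (∀ (l m : ℂ) (a b : R) (x : Q),    -- (L3)
        lt m x (br l a b) = rh l a (lt m x b) - lt (l + m) (rh l a x) b) ∧
     (∀ (l m : ℂ) (a b : R) (x : Q),    -- (L4)
        rt m x (br l a b)
          = br l a (rt m x b) + lh l a (lt m x b) - br (l + m) (lh l a x) b
            - rt (l + m) (rh l a x) b) ∧
     (∀ (l m : ℂ) (a b : R) (x : Q),    -- (L5)
        br (l + m) (rt m x a) b + rt (l + m) (lt m x a) b + br (l + m) (lh l a x) b
          + rt (l + m) (rh l a x) b = 0) ∧
     (∀ (l m : ℂ) (a b : R) (x : Q),    -- (L6)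
        lt (l + m) (lt m x a) b + lt (l + m) (rh l a x) b = 0) ∧
     (∀ (l m : ℂ) (a : R) (x y : Q),    -- (L7)
        rh l a (bq m x y)
          = bq (l + m) (rh l a x) y + lt m x (lh l a y) + bq m x (rh l a y)
            + rh (l + m) (lh l a x) y) ∧
     (∀ (l m : ℂ) (a : R) (x y : Q),    -- (L8)
        lh l a (bq m x y)
          = lh (l + m) (lh l a x) y + fm (l + m) (rh l a x) y + rt m x (lh l a y)
            + fm m x (rh l a y) - br l a (fm m x y)) ∧
     (∀ (l m : ℂ) (a : R) (x y : Q),    -- (L9)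
        lh (l + m) (rt m x a) y + fm (l + m) (lt m x a) y + lh (l + m) (lh l a x) y
          + fm (l + m) (rh l a x) y = 0) ∧
     (∀ (l m : ℂ) (a : R) (x y : Q),    -- (L10)
        bq (l + m) (rh l a x) y + rh (l + m) (lh l a x) y + rh (l + m) (rt m x a) y
          + bq (l + m) (lt m x a) y = 0) ∧
     (∀ (l m : ℂ) (a : R) (x y : Q),    -- (L11)
        rt (l + m) (bq l x y) a
          = rt l x (rt m y a) + fm l x (lt m y a) - br (l + m) (fm l x y) a
            - rt m y (rt l x a) - fm m y (lt l x a)) ∧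
     (∀ (l m : ℂ) (a : R) (x y : Q),    -- (L12)
        lt (l + m) (bq l x y) a
          = lt l x (rt m y a) + bq l x (lt m y a) - lt m y (rt l x a) - bq m y (lt l x a)) ∧
     (∀ (l m : ℂ) (x y z : Q),          -- (L13)
        rt l x (fm m y z)
          = lh (l + m) (fm l x y) z + fm (l + m) (bq l x y) z + rt m y (fm l x z)
            + fm m y (bq l x z) - fm l x (bq m y z)) ∧
     (∀ (l m : ℂ) (x y z : Q),          -- (L14)
        lt l x (fm m y z)
          = rh (l + m) (fm l x y) z + lt m y (fm l x z) + bq (l + m) (bq l x y) z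
            + bq m y (bq l x z) - bq l x (bq m y z))) := by
  have hbr := hLeib.bilin
  obtain ⟨h1, h2, h3, h4, h5, h6⟩ := hdatum
  constructor
  · intro H
    have HJ := H.jacobi
    simp only [unifiedBracket, Prod.mk_add_mk, Prod.mk.injEq] at HJ
    have aab := fun l m a b x => HJ l m (a, 0) (b, 0) (0, x)
    have axb := fun l m a x b => HJ l m (a, 0) (0, x) (b, 0)
    have xab := fun l m x a b => HJ l m (0, x) (a, 0) (b, 0)
    have axy := fun l m a x y => HJ l m (a, 0) (0, x) (0, y)
    have xay := fun l m x a y => HJ l m (0, x) (a, 0) (0, y)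
    have xya := fun l m x y a => HJ l m (0, x) (0, y) (a, 0)
    have xyz := fun l m x y z => HJ l m (0, x) (0, y) (0, z)
    clear HJ H
    simp only [hbr.zero_left', h1.zero_left', h2.zero_left', h3.zero_left', h4.zero_left', h5.zero_left', h6.zero_left', hbr.zero_right', h1.zero_right', h2.zero_right', h3.zero_right', h4.zero_right', h5.zero_right', h6.zero_right',
      add_zero, zero_add] at aab axb xab axy xay xya xyz
    refine ⟨?_, ?_, ?_, ?_, ?_, ?_, ?_, ?_, ?_, ?_, ?_, ?_, ?_, ?_⟩
    · intro l m a b x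
      linear_combination (norm := abel) -(aab l m a b x).2
    · intro l m a b x
      linear_combination (norm := abel) -(aab l m a b x).1
    · intro l m a b x
      linear_combination (norm := abel) -(axb l m a x b).2
    · intro l m a b x
      linear_combination (norm := abel) -(axb l m a x b).1
    · intro l m a b x
      have e1 := (axb l m a x b).1
      have e2 := (xab m l x a b).1
      simp only [hbr.add_left, h1.add_left, h2.add_left, h3.add_left, h4.add_left, h5.add_left, h6.add_left, add_comm m l] at e1 e2 ⊢
      linear_combination (norm := abel) -e1 - e2
    · intro l m a b x
      have e1 := (axb l m a x b).2
      have e2 := (xab m l x a b).2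
      simp only [hbr.add_left, h1.add_left, h2.add_left, h3.add_left, h4.add_left, h5.add_left, h6.add_left, add_comm m l] at e1 e2 ⊢
      linear_combination (norm := abel) -e1 - e2
    · intro l m a x y
      linear_combination (norm := abel) (axy l m a x y).2
    · intro l m a x y
      linear_combination (norm := abel) (axy l m a x y).1
    · intro l m a x y
      have e1 := (axy l m a x y).1
      have e2 := (xay m l x a y).1
      simp only [hbr.add_left, h1.add_left, h2.add_left, h3.add_left, h4.add_left, h5.add_left, h6.add_left, add_comm m l] at e1 e2 ⊢
      linear_combination (norm := abel) -e1 - e2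
    · intro l m a x y
      have e1 := (axy l m a x y).2
      have e2 := (xay m l x a y).2
      simp only [hbr.add_left, h1.add_left, h2.add_left, h3.add_left, h4.add_left, h5.add_left, h6.add_left, add_comm m l] at e1 e2 ⊢
      linear_combination (norm := abel) -e1 - e2
    · intro l m a x y
      linear_combination (norm := abel) -(xya l m x y a).1
    · intro l m a x y
      linear_combination (norm := abel) -(xya l m x y a).2
    · intro l m x y z
      linear_combination (norm := abel) (xyz l m x y z).1
    · intro l m x y z
      linear_combination (norm := abel) (xyz l m x y z).2
  · rintro ⟨L1, L2, L3, L4, L5, L6, L7, L8, L9, L10, L11, L12, L13, L14⟩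
    refine ⟨⟨?_, ?_, ?_, ?_, ?_, ?_, ?_⟩, ?_⟩
    · intro l a a' b
      ext
      · simp only [unifiedBracket, Prod.fst_add, Prod.snd_add, hbr.add_left, h1.add_left, h2.add_left, h3.add_left, h4.add_left, h5.add_left, h6.add_left]
        abel
      · simp only [unifiedBracket, Prod.fst_add, Prod.snd_add, hbr.add_left, h1.add_left, h2.add_left, h3.add_left, h4.add_left, h5.add_left, h6.add_left]
        abel
    · intro l c a b
      simp only [unifiedBracket, Prod.smul_fst, Prod.smul_snd, Prod.smul_mk, smul_add, hbr.smul_left, h1.smul_left, h2.smul_left, h3.smul_left, h4.smul_left, h5.smul_left, h6.smul_left]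
    · intro l a b b'
      ext
      · simp only [unifiedBracket, Prod.fst_add, Prod.snd_add, hbr.add_right, h1.add_right, h2.add_right, h3.add_right, h4.add_right, h5.add_right, h6.add_right]
        abel
      · simp only [unifiedBracket, Prod.fst_add, Prod.snd_add, hbr.add_right, h1.add_right, h2.add_right, h3.add_right, h4.add_right, h5.add_right, h6.add_right]
        abel
    · intro l c a b
      simp only [unifiedBracket, Prod.smul_fst, Prod.smul_snd, Prod.smul_mk, smul_add, hbr.smul_right, h1.smul_right, h2.smul_right, h3.smul_right, h4.smul_right, h5.smul_right, h6.smul_right]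
    · intro p q
      exact ((((hbr.poly _ _).add' (h1.poly _ _)).add' (h4.poly _ _)).add' (h5.poly _ _)).prod'
        (((h2.poly _ _).add' (h3.poly _ _)).add' (h6.poly _ _))
    · intro l a b
      simp only [unifiedBracket, LinearMap.prodMap_apply, Prod.smul_mk, smul_add, hbr.conf_left, h1.conf_left, h2.conf_left, h3.conf_left, h4.conf_left, h5.conf_left, h6.conf_left]
    · intro l a b
      ext
      · simp only [unifiedBracket, LinearMap.prodMap_apply, Prod.fst_add, Prod.smul_fst, smul_add, map_add, hbr.conf_right, h1.conf_right, h2.conf_right, h3.conf_right, h4.conf_right, h5.conf_right, h6.conf_right]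
        abel
      · simp only [unifiedBracket, LinearMap.prodMap_apply, Prod.snd_add, Prod.smul_snd, smul_add, map_add, hbr.conf_right, h1.conf_right, h2.conf_right, h3.conf_right, h4.conf_right, h5.conf_right, h6.conf_right]
        abel
    · rintro l m ⟨a, x⟩ ⟨b, y⟩ ⟨c, z⟩
      ext
      · simp only [unifiedBracket, Prod.mk_add_mk, hbr.add_left, h1.add_left, h2.add_left, h3.add_left, h4.add_left, h5.add_left, h6.add_left, hbr.add_right, h1.add_right, h2.add_right, h3.add_right, h4.add_right, h5.add_right, h6.add_right]
        have e5 := L5 m l b c x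
        have e4 := L4 m l b c x
        have e9 := L9 m l b x z
        have e8 := L8 m l b x z
        simp only [add_comm m l] at e5 e4 e9 e8
        linear_combination (norm := abel) hLeib.jacobi l m a b c - L2 l m a b z - L4 l m a c y
          + e4 - e5 + L8 l m a y z - e9 - e8 - L11 l m c x y + L13 l m x y z
      · simp only [unifiedBracket, Prod.mk_add_mk, hbr.add_left, h1.add_left, h2.add_left, h3.add_left, h4.add_left, h5.add_left, h6.add_left, hbr.add_right, h1.add_right, h2.add_right, h3.add_right, h4.add_right, h5.add_right, h6.add_right]
        have e5 := L6 m l b c x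
        have e4 := L3 m l b c x
        have e9 := L10 m l b x z
        have e8 := L7 m l b x z
        simp only [add_comm m l] at e5 e4 e9 e8
        linear_combination (norm := abel) - L1 l m a b z - L3 l m a c y
          + e4 - e5 + L7 l m a y z - e9 - e8 - L12 l m c x y + L14 l m x y z
end
end

section
/- Let R be a Leibniz conformal algebra, Q a ℂ[∂]-module, and Ω(R,Q) = (↼_λ, ⇀_λ, ◁_λ, ▷_λ, f_λ, {·_λ·}) a Leibniz conformal extending structure of R by Q (i.e. the unified product R♮Q is a Leibniz conformal algebra). Then (Q, ⇀_λ, ◁_λ) is a module over R. -/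
noncomputable section

/-- A module `(M, lact, ract)` over a Leibniz conformal algebra `(L, DL, brL)`:
two conformal bilinear actions satisfying the three module axioms. -/
structure IsLCModule {L M : Type*}
    [AddCommGroup L] [Module ℂ L] [AddCommGroup M] [Module ℂ M]
    (DL : Module.End ℂ L) (DM : Module.End ℂ M)
    (brL : ℂ → L → L → L) (lact : ℂ → L → M → M) (ract : ℂ → M → L → M) : Prop where
  lact_bilin : IsConformalBilin DL DM DM lact
  ract_bilin : IsConformalBilin DM DL DM ract
  ax1 : ∀ (l m : ℂ) (a b : L) (x : M),
    lact l a (lact m b x) = lact (l + m) (brL l a b) x + lact m b (lact l a x)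
  ax2 : ∀ (l m : ℂ) (a b : L) (x : M),
    lact l a (ract m x b) = ract (l + m) (lact l a x) b + ract m x (brL l a b)
  ax3 : ∀ (l m : ℂ) (a b : L) (x : M),
    ract l x (brL m a b) = ract (l + m) (ract l x a) b + lact m a (ract l x b)

theorem conf_zero {U V W : Type*} [AddCommGroup U] [Module ℂ U] [AddCommGroup V] [Module ℂ V]
    [AddCommGroup W] [Module ℂ W] {DU : Module.End ℂ U} {DV : Module.End ℂ V}
    {DW : Module.End ℂ W} {f : ℂ → U → V → W} (h : IsConformalBilin DU DV DW f) :
    (∀ l v, f l 0 v = 0) ∧ (∀ l u, f l u 0 = 0) :=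
  ⟨fun l v => by simpa using h.smul_left l 0 0 v,
    fun l u => by simpa using h.smul_right l 0 u 0⟩

/-- If `Ω(R,Q)` is a Leibniz conformal extending structure of `R` by `Q`
(i.e. the unified product `R ♮ Q` is a Leibniz conformal algebra), then `(Q, ⇀, ◁)` is
a module over `R`. -/
theorem isLCModule_of_extending_structure
    {R Q : Type*} [AddCommGroup R] [Module ℂ R] [AddCommGroup Q] [Module ℂ Q]
    (DR : Module.End ℂ R) (DQ : Module.End ℂ Q)
    (br : ℂ → R → R → R) (hLeib : IsLeibnizConformal DR br)
    (lh : ℂ → R → Q → R) (rh : ℂ → R → Q → Q)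
    (lt : ℂ → Q → R → Q) (rt : ℂ → Q → R → R)
    (fm : ℂ → Q → Q → R) (bq : ℂ → Q → Q → Q)
    (hdatum : IsExtendingDatum DR DQ lh rh lt rt fm bq)
    (hunified : IsLeibnizConformal (LinearMap.prodMap DR DQ)
      (unifiedBracket br lh rh lt rt fm bq)) :
    IsLCModule DR DQ br rh lt := by
  obtain ⟨a1, a2⟩ := conf_zero hLeib.bilin
  obtain ⟨b1, b2⟩ := conf_zero hdatum.lh_bilin
  obtain ⟨c1, c2⟩ := conf_zero hdatum.rh_bilin
  obtain ⟨d1, d2⟩ := conf_zero hdatum.lt_bilin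
  obtain ⟨e1, e2⟩ := conf_zero hdatum.rt_bilin
  obtain ⟨f1, f2⟩ := conf_zero hdatum.fm_bilin
  obtain ⟨g1, g2⟩ := conf_zero hdatum.bq_bilin
  refine ⟨hdatum.rh_bilin, hdatum.lt_bilin, fun l m a b x => ?_, fun l m a b x => ?_,
    fun l m a b x => ?_⟩
  · simpa [unifiedBracket, a1, a2, b1, b2, c1, c2, d1, d2, e1, e2, f1, f2, g1, g2] using
      congrArg Prod.snd (hunified.jacobi l m (a, 0) (b, 0) (0, x))
  · simpa [unifiedBracket, a1, a2, b1, b2, c1, c2, d1, d2, e1, e2, f1, f2, g1, g2] using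
      congrArg Prod.snd (hunified.jacobi l m (a, 0) (0, x) (b, 0))
  · simpa [unifiedBracket, a1, a2, b1, b2, c1, c2, d1, d2, e1, e2, f1, f2, g1, g2] using
      congrArg Prod.snd (hunified.jacobi l m (0, x) (a, 0) (b, 0))
end
end

section
/- Let R be a Leibniz conformal algebra, Q a ℂ[∂]-module, and set E = R ⊕ Q (direct sum of ℂ[∂]-modules). Suppose E carries a Leibniz conformal algebra structure [·_λ·] such that R is a subalgebra of E. Then there exists a Leibniz conformal extending structure Ω(R,Q) = (↼_λ, ⇀_λ, ◁_λ, ▷_λ, f_λ, {·_λ·}) of R by Q and an isomorphism of Leibniz conformal algebras E ≅ R♮Q which stabilizes R and co-stabilizes Q. Explicitly, letting p: E → R be the natural projection, the extending structure is given by a↼_λ x = p([a_λ x]), a⇀_λ x = [a_λ x] − p([a_λ x]), x▷_λ a = p([x_λ a]), x◁_λ a = [x_λ a] − p([x_λ a]), f_λ(x,y) = p([x_λ y]), {x_λ y} = [x_λ y] − p([x_λ y]) for a ∈ R, x,y ∈ Q. -/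
noncomputable section

theorem IsConformalBilin.transfer {E U V W : Type*}
    [AddCommGroup E] [Module ℂ E] [AddCommGroup U] [Module ℂ U] [AddCommGroup V] [Module ℂ V]
    [AddCommGroup W] [Module ℂ W]
    {DE : Module.End ℂ E} {DU : Module.End ℂ U} {DV : Module.End ℂ V} {DW : Module.End ℂ W}
    {f : ℂ → E → E → E} (h : IsConformalBilin DE DE DE f)
    (i : U →ₗ[ℂ] E) (j : V →ₗ[ℂ] E) (p : E →ₗ[ℂ] W)
    (hi : ∀ u, i (DU u) = DE (i u)) (hj : ∀ u, j (DV u) = DE (j u))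
    (hp : ∀ u, p (DE u) = DW (p u)) :
    IsConformalBilin DU DV DW (fun l u v => p (f l (i u) (j v))) where
  add_left l a a' b := by simp [h.add_left]
  smul_left l c a b := by simp [h.smul_left]
  add_right l a b b' := by simp [h.add_right]
  smul_right l c a b := by simp [h.smul_right]
  poly a b := by
    obtain ⟨N, c, hc⟩ := h.poly (i a) (j b)
    refine ⟨N, fun k => p (c k), fun l => ?_⟩
    have := hc l
    simp only at this
    simp [this]
  conf_left l a b := by simp only [hi, h.conf_left, map_smul]
  conf_right l a b := by simp only [hj, h.conf_right, map_smul, map_add, hp]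

/-- If `E = R ⊕ Q` carries a Leibniz conformal algebra structure such that
`R` is a subalgebra, then there is a Leibniz conformal extending structure `Ω(R,Q)` of
`R` by `Q`, given by the explicit formulas via the projection `p = Prod.fst : E → R`,
such that `E` is isomorphic to `R ♮ Q` (here the unified bracket literally coincides with
the given one, so the identity is an isomorphism stabilizing `R` and co-stabilizing `Q`). -/
theorem extending_structure_of_subalgebra
    {R Q : Type*} [AddCommGroup R] [Module ℂ R] [AddCommGroup Q] [Module ℂ Q]
    (DR : Module.End ℂ R) (DQ : Module.End ℂ Q)
    (br : ℂ → R → R → R) (hLeib : IsLeibnizConformal DR br)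
    (brE : ℂ → R × Q → R × Q → R × Q)
    (hE : IsLeibnizConformal (LinearMap.prodMap DR DQ) brE)
    (hsub : ∀ (l : ℂ) (a b : R), brE l (a, 0) (b, 0) = (br l a b, 0)) :
    ∃ (lh : ℂ → R → Q → R) (rh : ℂ → R → Q → Q) (lt : ℂ → Q → R → Q)
      (rt : ℂ → Q → R → R) (fm : ℂ → Q → Q → R) (bq : ℂ → Q → Q → Q),
      IsExtendingDatum DR DQ lh rh lt rt fm bq ∧
      IsLeibnizConformal (LinearMap.prodMap DR DQ)
        (unifiedBracket br lh rh lt rt fm bq) ∧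
      (∀ (l : ℂ) (u v : R × Q), unifiedBracket br lh rh lt rt fm bq l u v = brE l u v) ∧
      (∀ (l : ℂ) (a : R) (x : Q), lh l a x = (brE l (a, 0) (0, x)).1) ∧
      (∀ (l : ℂ) (a : R) (x : Q), rh l a x = (brE l (a, 0) (0, x)).2) ∧
      (∀ (l : ℂ) (x : Q) (a : R), rt l x a = (brE l (0, x) (a, 0)).1) ∧
      (∀ (l : ℂ) (x : Q) (a : R), lt l x a = (brE l (0, x) (a, 0)).2) ∧
      (∀ (l : ℂ) (x y : Q), fm l x y = (brE l (0, x) (0, y)).1) ∧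
      (∀ (l : ℂ) (x y : Q), bq l x y = (brE l (0, x) (0, y)).2) := by
  have key : ∀ (l : ℂ) (u v : R × Q), unifiedBracket br
      (fun l a x => (brE l (a, 0) (0, x)).1) (fun l a x => (brE l (a, 0) (0, x)).2)
      (fun l x a => (brE l (0, x) (a, 0)).2) (fun l x a => (brE l (0, x) (a, 0)).1)
      (fun l x y => (brE l (0, x) (0, y)).1) (fun l x y => (brE l (0, x) (0, y)).2) l u v
        = brE l u v := by
    rintro l ⟨a, x⟩ ⟨b, y⟩
    have e1 : ((a, x) : R × Q) = (a, 0) + (0, x) := by simp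
    have e2 : ((b, y) : R × Q) = (b, 0) + (0, y) := by simp
    rw [e1, e2, hE.bilin.add_left, hE.bilin.add_right, hE.bilin.add_right, hsub, ← e1, ← e2]
    ext
    · simp only [unifiedBracket, Prod.fst_add]; abel
    · simp only [unifiedBracket, Prod.snd_add]; abel
  refine ⟨_, _, _, _, _, _, ?_, ?_, key, fun _ _ _ => rfl, fun _ _ _ => rfl, fun _ _ _ => rfl,
    fun _ _ _ => rfl, fun _ _ _ => rfl, fun _ _ _ => rfl⟩
  · have hl : ∀ u, LinearMap.inl ℂ R Q (DR u)
        = LinearMap.prodMap DR DQ (LinearMap.inl ℂ R Q u) := fun u => by simp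
    have hr : ∀ u, LinearMap.inr ℂ R Q (DQ u)
        = LinearMap.prodMap DR DQ (LinearMap.inr ℂ R Q u) := fun u => by simp
    have hf : ∀ u, LinearMap.fst ℂ R Q (LinearMap.prodMap DR DQ u)
        = DR (LinearMap.fst ℂ R Q u) := fun u => rfl
    have hs : ∀ u, LinearMap.snd ℂ R Q (LinearMap.prodMap DR DQ u)
        = DQ (LinearMap.snd ℂ R Q u) := fun u => rfl
    exact ⟨hE.bilin.transfer _ _ _ hl hr hf, hE.bilin.transfer _ _ _ hl hr hs,
      hE.bilin.transfer _ _ _ hr hl hs, hE.bilin.transfer _ _ _ hr hl hf,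
      hE.bilin.transfer _ _ _ hr hr hf, hE.bilin.transfer _ _ _ hr hr hs⟩
  · have := funext fun l => funext fun u => funext fun v => key l u v
    rw [this]
    exact hE
end
end
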